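/- Let Q ⊂ ℝ² be a square of area A > 0 and fix v_max > 0, u_max > 0. For each m ≥ 1 define the optimal light-load coverage cost of m double-integrator robots as T_opt^DI(m) = inf over all configurations g₁,…,g_m ∈ ℝ² × ℝ² with ‖v_i‖ ≤ v_max of (1/A)∫_Q min_{1≤i≤m} τ_DI(g_i, q) dq. Then liminf_{m→∞} m^{1/3} · T_opt^DI(m) ≥ (1/24) (A / (2 v_max u_max))^{1/3}. -/

import Mathlib

open MeasureTheory Filter Topology Real

noncomputable section

/-- The plane `ℝ²` with the Euclidean norm. -/
abbrev Plane : Type := EuclideanSpace ℝ (Fin 2)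

/-- A double-integrator (DI) trajectory with speed bound `vmax` and acceleration bound
`umax`: a twice continuously differentiable curve in the plane whose velocity and
acceleration are bounded by `vmax` and `umax` respectively. -/
def IsDITraj (vmax umax : ℝ) (x : ℝ → Plane) : Prop :=
  ContDiff ℝ 2 x ∧ (∀ t, ‖deriv x t‖ ≤ vmax) ∧ (∀ t, ‖deriv (deriv x) t‖ ≤ umax)

/-- Minimum travel time of a DI robot from configuration `(p, v)` to the point `q`. -/
def tauDI (vmax umax : ℝ) (p v q : Plane) : ℝ :=
  sInf {T : ℝ | 0 ≤ T ∧ ∃ x : ℝ → Plane, IsDITraj vmax umax x ∧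
    x 0 = p ∧ deriv x 0 = v ∧ x T = q}

/-- Reachable set at time `t` of a DI robot starting at configuration `(p, v)`. -/
def reachDI (vmax umax : ℝ) (p v : Plane) (t : ℝ) : Set Plane :=
  {q | tauDI vmax umax p v q ≤ t}


/-- Points reachable at time exactly `T`. -/
def exactReach (vmax umax : ℝ) (p v : Plane) (T : ℝ) : Set Plane :=
  {q | ∃ x : ℝ → Plane, IsDITraj vmax umax x ∧ x 0 = p ∧ deriv x 0 = v ∧ x T = q}

lemma deriv_differentiable {x : ℝ → Plane} (hx : ContDiff ℝ 2 x) : Differentiable ℝ (deriv x) := by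
  have h : ContDiff ℝ (1 + 1) x := by
    rw [one_add_one_eq_two]; exact hx
  exact (contDiff_succ_iff_deriv.1 h).2.2.differentiable (by norm_num)

lemma convex_exactReach (vmax umax : ℝ) (p v : Plane) (T : ℝ) :
    Convex ℝ (exactReach vmax umax p v T) := by
  rintro _ ⟨x, ⟨hx, hx1, hx2⟩, rfl, rfl, rfl⟩ _ ⟨y, ⟨hy, hy1, hy2⟩, h0, h1, rfl⟩ a b ha hb hab
  have dx : Differentiable ℝ x := hx.differentiable (by norm_num)
  have dy : Differentiable ℝ y := hy.differentiable (by norm_num)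
  have dx' : Differentiable ℝ (deriv x) :=
    deriv_differentiable hx
  have dy' : Differentiable ℝ (deriv y) :=
    deriv_differentiable hy
  have e1 : deriv (fun t => a • x t + b • y t) = fun t => a • deriv x t + b • deriv y t := by
    funext t
    exact (((dx t).hasDerivAt.const_smul a).add ((dy t).hasDerivAt.const_smul b)).deriv
  have e2 : deriv (fun t => a • deriv x t + b • deriv y t) =
      fun t => a • deriv (deriv x) t + b • deriv (deriv y) t := by
    funext t
    exact (((dx' t).hasDerivAt.const_smul a).add ((dy' t).hasDerivAt.const_smul b)).deriv
  have key : ∀ (z w : Plane) (C : ℝ), ‖z‖ ≤ C → ‖w‖ ≤ C → ‖a • z + b • w‖ ≤ C := by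
    intro z w C hz hw
    calc ‖a • z + b • w‖ ≤ ‖a • z‖ + ‖b • w‖ := norm_add_le _ _
      _ = a * ‖z‖ + b * ‖w‖ := by rw [norm_smul_of_nonneg ha, norm_smul_of_nonneg hb]
      _ ≤ a * C + b * C := by gcongr
      _ = C := by rw [← add_mul, hab, one_mul]
  refine ⟨fun t => a • x t + b • y t, ⟨(hx.const_smul a).add (hy.const_smul b), ?_, ?_⟩, ?_, ?_, rfl⟩
  · intro t; rw [e1]; exact key _ _ _ (hx1 t) (hy1 t)
  · intro t; rw [e1, e2]; exact key _ _ _ (hx2 t) (hy2 t)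
  · simp only [h0]; rw [← add_smul, hab, one_smul]
  · rw [e1]; simp only [h1]; rw [← add_smul, hab, one_smul]

lemma traj_of (vmax umax : ℝ) (p v w : Plane) (g g' g'' : ℝ → ℝ) (hg : ContDiff ℝ 2 g)
    (h1 : ∀ t, HasDerivAt g (g' t) t) (h2 : ∀ t, HasDerivAt g' (g'' t) t)
    (b1 : ∀ t, ‖v + g' t • w‖ ≤ vmax) (b2 : ∀ t, ‖g'' t • w‖ ≤ umax)
    (z0 : g 0 = 0) (z1 : g' 0 = 0) (T : ℝ) :
    p + T • v + g T • w ∈ exactReach vmax umax p v T := by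
  have e1 : deriv (fun t : ℝ => p + t • v + g t • w) = fun t => v + g' t • w := by
    funext t
    have := ((((hasDerivAt_id t).smul_const v).const_add p).add ((h1 t).smul_const w)).deriv
    rw [one_smul] at this
    exact this
  have e2 : deriv (fun t => v + g' t • w) = fun t => g'' t • w := by
    funext t
    exact (((h2 t).smul_const w).const_add v).deriv
  refine ⟨fun t => p + t • v + g t • w, ⟨by fun_prop, ?_, ?_⟩, ?_, ?_, rfl⟩
  · rw [e1]; exact b1
  · rw [e1, e2]; exact b2
  · simp [z0]
  · rw [e1]; simp [z1]

/-- The slow steering family: a whole ball is reachable at each time. -/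
lemma ball_reach (vmax umax : ℝ) (hv : 0 < vmax) (hu : 0 < umax) (p v w : Plane)
    (hvv : ‖v‖ ≤ vmax) (hw : ‖w‖ ≤ vmax) (T : ℝ) :
    p + T • v + (T - arctan ((umax / (2 * vmax)) * T) / (umax / (2 * vmax))) • (w - v)
      ∈ exactReach vmax umax p v T := by
  set k := umax / (2 * vmax) with hk
  have kpos : 0 < k := by positivity
  have hu' : umax = k * (2 * vmax) := by rw [hk]; field_simp
  refine traj_of vmax umax p v (w - v) (fun t => t - arctan (k * t) / k)
    (fun t => 1 - 1 / (1 + (k * t) ^ 2)) (fun t => 2 * k ^ 2 * t / (1 + (k * t) ^ 2) ^ 2)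
    ?_ ?_ ?_ ?_ ?_ (by simp) (by simp) T
  · exact contDiff_id.sub ((Real.contDiff_arctan.comp (contDiff_const.mul contDiff_id)).div_const k)
  · intro t
    have := (hasDerivAt_id t).sub
      (((Real.hasDerivAt_arctan (k * t)).comp t ((hasDerivAt_id t).const_mul k)).div_const k)
    have e : 1 - 1 / (1 + (k * t) ^ 2) = 1 - 1 / (1 + (k * t) ^ 2) * (k * 1) / k := by
      field_simp
    simp only [e]
    exact this
  · intro t
    have hne : (1 + (k * t) ^ 2) ≠ 0 := by positivity
    have h := (((((hasDerivAt_id t).const_mul k).pow 2).const_add 1).inv hne).const_sub 1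
    have e : -(-(((2 : ℕ) : ℝ) * (k * t) ^ (2 - 1) * (k * 1)) / (1 + (k * t) ^ 2) ^ 2) =
        2 * k ^ 2 * t / (1 + (k * t) ^ 2) ^ 2 := by
      push_cast
      field_simp
    simp only [one_div]
    exact HasDerivAt.congr_deriv h e
  · intro t
    have hpos : 0 < 1 + (k * t) ^ 2 := by positivity
    have hs : 1 / (1 + (k * t) ^ 2) ≤ 1 := by
      rw [div_le_one hpos]; nlinarith [sq_nonneg (k * t)]
    have hs0 : 0 ≤ 1 / (1 + (k * t) ^ 2) := by positivity
    set s := 1 / (1 + (k * t) ^ 2)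
    have : v + (1 - s) • (w - v) = s • v + (1 - s) • w := by module
    simp only [this]
    calc ‖s • v + (1 - s) • w‖ ≤ ‖s • v‖ + ‖(1 - s) • w‖ := norm_add_le _ _
      _ = s * ‖v‖ + (1 - s) * ‖w‖ := by
        rw [norm_smul_of_nonneg hs0, norm_smul_of_nonneg (sub_nonneg.2 hs)]
      _ ≤ s * vmax + (1 - s) * vmax := by
        have := sub_nonneg.2 hs
        gcongr
      _ = vmax := by ring
  · intro t
    have hpos : 0 < 1 + (k * t) ^ 2 := by positivity
    rw [norm_smul]
    have hb : ‖2 * k ^ 2 * t / (1 + (k * t) ^ 2) ^ 2‖ ≤ k := by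
      rw [Real.norm_eq_abs, abs_div, abs_of_pos (by positivity : 0 < (1 + (k * t) ^ 2) ^ 2),
        div_le_iff₀ (by positivity)]
      have h1 : |2 * k ^ 2 * t| = k * (2 * |k * t|) := by
        rw [abs_mul (2 * k ^ 2), abs_mul k, abs_of_pos (by positivity : 0 < 2 * k ^ 2), abs_of_pos kpos]; ring
      rw [h1]
      apply mul_le_mul_of_nonneg_left _ kpos.le
      have h2 : (k * t) ^ 2 = |k * t| ^ 2 := (sq_abs _).symm
      rw [h2]
      nlinarith [sq_nonneg (|k * t| - 1), sq_nonneg (|k * t|), sq_nonneg (|k * t| ^ 2)]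
    have hn : ‖w - v‖ ≤ 2 * vmax := (norm_sub_le _ _).trans (by linarith)
    rw [hu']
    gcongr

lemma arctan_div_lt {k T : ℝ} (hk : 0 < k) (hT : 0 < T) : 0 < T - arctan (k * T) / k := by
  rw [sub_pos, div_lt_iff₀ hk]
  have h := Real.lt_tan (Real.arctan_pos.2 (mul_pos hk hT)) (Real.arctan_lt_pi_div_two _)
  rw [Real.tan_arctan] at h
  linarith

lemma closedBall_subset_exactReach (vmax umax : ℝ) (hv : 0 < vmax) (hu : 0 < umax) (p v : Plane)
    (hvv : ‖v‖ ≤ vmax) {T : ℝ} (hT : 0 < T) :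
    Metric.closedBall (p + (arctan ((umax / (2 * vmax)) * T) / (umax / (2 * vmax))) • v)
      ((T - arctan ((umax / (2 * vmax)) * T) / (umax / (2 * vmax))) * vmax)
      ⊆ exactReach vmax umax p v T := by
  have kpos : 0 < umax / (2 * vmax) := by positivity
  have hpos := arctan_div_lt kpos hT
  intro q hq
  set R := arctan ((umax / (2 * vmax)) * T) / (umax / (2 * vmax)) with hR
  have hw : ‖(T - R)⁻¹ • (q - (p + R • v))‖ ≤ vmax := by
    rw [norm_smul_of_nonneg (by positivity), inv_mul_le_iff₀ hpos, ← dist_eq_norm]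
    exact hq
  have := ball_reach vmax umax hv hu p v _ hvv hw T
  rw [← hR] at this
  convert this using 1
  rw [smul_sub, smul_smul, mul_inv_cancel₀ hpos.ne']
  module

lemma interior_exactReach_nonempty (vmax umax : ℝ) (hv : 0 < vmax) (hu : 0 < umax) (p v : Plane)
    (hvv : ‖v‖ ≤ vmax) {T : ℝ} (hT : 0 < T) :
    (interior (exactReach vmax umax p v T)).Nonempty := by
  refine ⟨_, interior_mono (closedBall_subset_exactReach vmax umax hv hu p v hvv hT)
    (Metric.ball_subset_interior_closedBall (Metric.mem_ball_self ?_))⟩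
  exact mul_pos (arctan_div_lt (by positivity) hT) hv

lemma exists_reach (vmax umax : ℝ) (hv : 0 < vmax) (hu : 0 < umax) (p v q : Plane)
    (hvv : ‖v‖ ≤ vmax) :
    q ∈ exactReach vmax umax p v (‖q - p‖ / vmax + 2 * (π / (umax / (2 * vmax)))) := by
  have kpos : 0 < umax / (2 * vmax) := by positivity
  set k := umax / (2 * vmax) with hk
  have hT : 0 < ‖q - p‖ / vmax + 2 * (π / k) := by positivity
  apply closedBall_subset_exactReach vmax umax hv hu p v hvv hT
  rw [← hk]
  set T := ‖q - p‖ / vmax + 2 * (π / k) with hTd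
  have h0 : 0 ≤ arctan (k * T) / k := div_nonneg (Real.arctan_nonneg.2 (by positivity)) kpos.le
  have h1 : arctan (k * T) / k ≤ π / k := by
    gcongr
    linarith [Real.arctan_lt_pi_div_two (k * T), Real.pi_pos]
  set R := arctan (k * T) / k
  rw [Metric.mem_closedBall, dist_eq_norm]
  have h2 : ‖q - (p + R • v)‖ ≤ ‖q - p‖ + R * vmax := by
    have : q - (p + R • v) = (q - p) - R • v := by module
    rw [this]
    refine (norm_sub_le _ _).trans ?_
    rw [norm_smul_of_nonneg h0]
    gcongr
  have h3 : ‖q - p‖ = (T - 2 * (π / k)) * vmax := by rw [hTd]; field_simp; ring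
  rw [h3] at h2
  nlinarith

/-! Union of convex bodies: almost all of it is in the union of interiors. -/
lemma volume_iUnion_diff_interior {ι : Type*} (C : ι → Set Plane) (hC : ∀ i, Convex ℝ (C i))
    (hi : ∀ i, (interior (C i)).Nonempty) :
    volume ((⋃ i, C i) \ ⋃ i, interior (C i)) = 0 := by
  set S := (⋃ i, C i) \ ⋃ i, interior (C i) with hS
  have hd := Besicovitch.ae_tendsto_measure_inter_div (volume : Measure Plane) S
  rw [ae_iff] at hd
  rw [← Measure.restrict_apply_self]
  refine measure_mono_null ?_ hd
  intro q hq
  simp only [Set.mem_ofPred_eq]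
  intro hlim
  obtain ⟨i, hqi⟩ := Set.mem_iUnion.1 hq.1
  obtain ⟨c, hc⟩ := hi i
  obtain ⟨ρ, hρ, hball⟩ := Metric.isOpen_iff.1 isOpen_interior c hc
  set D := ‖c - q‖ + ρ with hD
  have hDpos : 0 < D := by positivity
  have hκ : 0 < (ρ / D) ^ 2 := by positivity
  have hκ1 : (ρ / D) ^ 2 ≤ 1 := by
    rw [sq_le_one_iff₀ (by positivity), div_le_one hDpos]
    linarith [norm_nonneg (c - q)]
  have hev : ∀ᶠ r in 𝓝[>] (0 : ℝ), volume (S ∩ Metric.closedBall q r) /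
      volume (Metric.closedBall q r) ≤ ENNReal.ofReal (1 - (ρ / D) ^ 2) := by
    filter_upwards [Ioc_mem_nhdsGT hDpos] with r hr
    have hr0 : 0 < r := hr.1
    have hs : r / D ∈ Set.Ioc (0 : ℝ) 1 := ⟨by positivity, (div_le_one hDpos).2 hr.2⟩
    set s := r / D with hsd
    have hrs : r = s * D := by rw [hsd]; field_simp
    have hsub : Metric.ball (q + s • (c - q)) (s * ρ) ⊆ interior (C i) := by
      intro y hy
      have hy' : q + s⁻¹ • (y - q) ∈ Metric.ball c ρ := by
        rw [Metric.mem_ball, dist_eq_norm] at hy ⊢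
        have : q + s⁻¹ • (y - q) - c = s⁻¹ • (y - (q + s • (c - q))) := by
          rw [smul_sub s⁻¹ y (q + _), smul_add, smul_smul, inv_mul_cancel₀ hs.1.ne']
          module
        rw [this, norm_smul_of_nonneg (inv_nonneg.2 hs.1.le), inv_mul_lt_iff₀ hs.1]
        exact hy
      have := (hC i).add_smul_sub_mem_interior hqi (hball hy') hs
      convert this using 1
      rw [add_sub_cancel_left, smul_smul, mul_inv_cancel₀ hs.1.ne']
      module
    have hsub2 : Metric.ball (q + s • (c - q)) (s * ρ) ⊆ Metric.closedBall q r := by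
      intro y hy
      rw [Metric.mem_ball, dist_eq_norm] at hy
      rw [Metric.mem_closedBall, dist_eq_norm]
      have : y - q = (y - (q + s • (c - q))) + s • (c - q) := by module
      rw [this, hrs]
      refine (norm_add_le _ _).trans ?_
      rw [norm_smul_of_nonneg hs.1.le, hD]
      linarith
    have hle : volume (S ∩ Metric.closedBall q r) ≤
        volume (Metric.closedBall q r) - volume (Metric.ball (q + s • (c - q)) (s * ρ)) := by
      rw [← measure_sdiff hsub2 Metric.isOpen_ball.measurableSet.nullMeasurableSet
        (measure_ball_lt_top).ne]
      apply measure_mono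
      rintro y ⟨hy1, hy2⟩
      exact ⟨hy2, fun hy3 => hy1.2 (Set.mem_iUnion.2 ⟨i, hsub hy3⟩)⟩
    apply ENNReal.div_le_of_le_mul
    refine hle.trans ?_
    rw [EuclideanSpace.volume_closedBall_fin_two, EuclideanSpace.volume_ball_fin_two,
      ← ENNReal.ofReal_pow hr0.le, ← ENNReal.ofReal_pow (by have := hs.1; positivity),
      ← ENNReal.ofReal_mul (by positivity), ← ENNReal.ofReal_mul (by positivity),
      ← ENNReal.ofReal_mul (by linarith), ← ENNReal.ofReal_sub _ (by positivity)]
    apply ENNReal.ofReal_le_ofReal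
    apply le_of_eq
    rw [hsd]
    field_simp
  have := le_of_tendsto hlim hev
  rw [← ENNReal.ofReal_one, ENNReal.ofReal_le_ofReal_iff (by linarith)] at this
  linarith

lemma tau_bddBelow (vmax umax : ℝ) (p v q : Plane) :
    BddBelow {T : ℝ | 0 ≤ T ∧ ∃ x : ℝ → Plane, IsDITraj vmax umax x ∧
    x 0 = p ∧ deriv x 0 = v ∧ x T = q} := ⟨0, fun _ h => h.1⟩

lemma tau_nonneg (vmax umax : ℝ) (p v q : Plane) : 0 ≤ tauDI vmax umax p v q :=
  Real.sInf_nonneg fun _ h => h.1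

lemma tau_le_of_reach {vmax umax : ℝ} {p v q : Plane} {T : ℝ} (hT : 0 ≤ T)
    (h : q ∈ exactReach vmax umax p v T) : tauDI vmax umax p v q ≤ T :=
  csInf_le (tau_bddBelow vmax umax p v q) ⟨hT, h⟩

lemma tau_lt_iff {vmax umax : ℝ} (hv : 0 < vmax) (hu : 0 < umax) {p v q : Plane}
    (hvv : ‖v‖ ≤ vmax) {t : ℝ} :
    tauDI vmax umax p v q < t ↔ ∃ T, 0 ≤ T ∧ T < t ∧ q ∈ exactReach vmax umax p v T := by
  constructor
  · intro h
    have hne : {T : ℝ | 0 ≤ T ∧ ∃ x : ℝ → Plane, IsDITraj vmax umax x ∧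
        x 0 = p ∧ deriv x 0 = v ∧ x T = q}.Nonempty :=
      ⟨_, by positivity, exists_reach vmax umax hv hu p v q hvv⟩
    obtain ⟨T, ⟨hT, hx⟩, hlt⟩ := exists_lt_of_csInf_lt hne h
    exact ⟨T, hT, hlt, hx⟩
  · rintro ⟨T, hT, hlt, hx⟩
    exact (tau_le_of_reach hT hx).trans_lt hlt

lemma tau_aemeasurable {vmax umax : ℝ} (hv : 0 < vmax) (hu : 0 < umax) {p v : Plane}
    (hvv : ‖v‖ ≤ vmax) : AEMeasurable (tauDI vmax umax p v) volume := by
  apply NullMeasurable.aemeasurable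
  have : @Measurable (NullMeasurableSpace Plane volume) ℝ _ _ (tauDI vmax umax p v) := by
    apply measurable_of_Iio
    intro t
    change NullMeasurableSet (tauDI vmax umax p v ⁻¹' Set.Iio t) volume
    let C : Set.Ioo (0 : ℝ) t → Set Plane := fun T => exactReach vmax umax p v T
    have hnull := volume_iUnion_diff_interior C (fun T => convex_exactReach _ _ _ _ _)
      (fun T => interior_exactReach_nonempty vmax umax hv hu p v hvv T.2.1)
    have hopen : IsOpen (⋃ i, interior (C i)) := isOpen_iUnion fun _ => isOpen_interior
    have hn2 : volume ((tauDI vmax umax p v ⁻¹' Set.Iio t) \ ⋃ i, interior (C i)) = 0 := by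
      refine measure_mono_null (t := ((⋃ i, C i) \ ⋃ i, interior (C i)) ∪ {p}) ?_
        (measure_union_null hnull (measure_singleton p))
      rintro q ⟨hq, hq2⟩
      obtain ⟨T, hT, hlt, hx⟩ := (tau_lt_iff hv hu hvv).1 hq
      rcases hT.eq_or_lt with h0 | h0
      · right
        subst h0
        obtain ⟨x, -, h1, -, h2⟩ := hx
        exact h2.symm.trans h1
      · left
        exact ⟨Set.mem_iUnion.2 ⟨⟨T, h0, hlt⟩, hx⟩, hq2⟩
    have hsub : (⋃ i, interior (C i)) ⊆ tauDI vmax umax p v ⁻¹' Set.Iio t := by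
      intro q hq
      obtain ⟨T, hT⟩ := Set.mem_iUnion.1 hq
      exact (tau_lt_iff hv hu hvv).2 ⟨T, T.2.1.le, T.2.2, interior_subset hT⟩
    have : tauDI vmax umax p v ⁻¹' Set.Iio t =
        (⋃ i, interior (C i)) ∪ ((tauDI vmax umax p v ⁻¹' Set.Iio t) \ ⋃ i, interior (C i)) :=
      (Set.union_sdiff_cancel hsub).symm
    rw [this]
    exact hopen.measurableSet.nullMeasurableSet.union_null hn2
  exact fun s hs => this hs

/-! Area bound. -/
lemma exactReach_near {vmax umax : ℝ} {p v q : Plane} {T : ℝ} (hT : 0 ≤ T)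
    (h : q ∈ exactReach vmax umax p v T) : ‖q - (p + T • v)‖ ≤ umax * T ^ 2 := by
  obtain ⟨x, ⟨hx, hx1, hx2⟩, rfl, rfl, rfl⟩ := h
  have dx : Differentiable ℝ x := hx.differentiable (by norm_num)
  have dx' : Differentiable ℝ (deriv x) :=
    deriv_differentiable hx
  have hu : 0 ≤ umax := (norm_nonneg _).trans (hx2 0)
  have h1 : ∀ s ∈ Set.Icc 0 T, ‖deriv x s - deriv x 0‖ ≤ umax * T := by
    intro s hs
    have := Convex.norm_image_sub_le_of_norm_deriv_le (f := deriv x) (s := Set.univ) (x := 0)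
      (y := s) (fun y _ => dx' y) (fun y _ => hx2 y) convex_univ trivial trivial
    refine this.trans ?_
    rw [sub_zero, Real.norm_eq_abs, abs_of_nonneg hs.1]
    have := hs.2
    gcongr
  have hd : ∀ s, HasDerivAt (fun t => x t - t • deriv x 0) (deriv x s - deriv x 0) s := by
    intro s
    have := (dx s).hasDerivAt.sub ((hasDerivAt_id s).smul_const (deriv x 0))
    rw [one_smul] at this
    exact this
  have := Convex.norm_image_sub_le_of_norm_deriv_le (f := fun t => x t - t • deriv x 0)
    (s := Set.Icc 0 T) (x := 0) (y := T) (C := umax * T) (fun y _ => (hd y).differentiableAt)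
    (fun y hy => by rw [(hd y).deriv]; exact h1 y hy) (convex_Icc _ _) ⟨le_rfl, hT⟩ ⟨hT, le_rfl⟩
  rw [sub_zero, Real.norm_eq_abs, abs_of_nonneg hT] at this
  have e : x T - (x 0 + T • deriv x 0) = x T - T • deriv x 0 - (x 0 - (0 : ℝ) • deriv x 0) := by
    module
  rw [e]
  refine this.trans (le_of_eq (by ring))

lemma volume_reach_le {vmax umax : ℝ} (hv : 0 < vmax) (hu : 0 < umax) {p v : Plane}
    (hvv : ‖v‖ ≤ vmax) {t : ℝ} (ht : 0 < t) (htu : umax * t ≤ vmax) :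
    volume {q | tauDI vmax umax p v q < t} ≤ ENNReal.ofReal (12 * π * (umax * vmax * t ^ 3)) := by
  set N : ℕ := ⌈vmax / (umax * t)⌉₊ with hN
  have hN1 : vmax / (umax * t) ≤ N := Nat.le_ceil _
  have hN2 : (N : ℝ) < vmax / (umax * t) + 1 := Nat.ceil_lt_add_one (by positivity)
  have hNpos : 0 < (N : ℝ) := lt_of_lt_of_le (by positivity) hN1
  have hsub : {q | tauDI vmax umax p v q < t} ⊆
      ⋃ j ∈ Finset.range (N + 1), Metric.closedBall (p + (j * (t / N)) • v) (2 * (umax * t ^ 2)) := by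
    intro q hq
    obtain ⟨T, hT, hlt, hx⟩ := (tau_lt_iff hv hu hvv).1 hq
    have hnear := exactReach_near hT hx
    set j : ℕ := ⌊T / (t / N)⌋₊ with hj
    have htN : 0 < t / N := by positivity
    have hj1 : (j : ℝ) ≤ T / (t / N) := Nat.floor_le (by positivity)
    have hj2 : T / (t / N) < j + 1 := Nat.lt_floor_add_one _
    have hjN : j < N + 1 := by
      have : (j : ℝ) < N := by
        refine hj1.trans_lt ?_
        rw [div_lt_iff₀ htN]
        field_simp
        exact hlt
      have : j < N := by exact_mod_cast this
      omega
    rw [le_div_iff₀ htN] at hj1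
    rw [div_lt_iff₀ htN] at hj2
    simp only [Set.mem_iUnion, Finset.mem_range]
    refine ⟨j, hjN, ?_⟩
    rw [Metric.mem_closedBall, dist_eq_norm]
    have e : q - (p + (j * (t / N)) • v) = (q - (p + T • v)) + (T - j * (t / N)) • v := by module
    rw [e]
    have h1 : ‖(T - j * (t / N)) • v‖ ≤ umax * t ^ 2 := by
      rw [norm_smul_of_nonneg (by linarith)]
      calc (T - j * (t / N)) * ‖v‖ ≤ (t / N) * vmax := by
            gcongr
            linarith
        _ ≤ umax * t ^ 2 := by
            rw [div_le_iff₀ (by positivity)] at hN1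
            rw [div_mul_eq_mul_div, div_le_iff₀ hNpos]
            nlinarith
    have h2 : umax * T ^ 2 ≤ umax * t ^ 2 := by gcongr
    exact (norm_add_le _ _).trans (by linarith)
  refine (measure_mono hsub).trans ((measure_biUnion_finset_le _ _).trans ?_)
  simp only [EuclideanSpace.volume_closedBall_fin_two]
  rw [Finset.sum_const, Finset.card_range, nsmul_eq_mul, ← ENNReal.ofReal_pow (by positivity),
    ← ENNReal.ofReal_mul (by positivity), ← ENNReal.ofReal_natCast,
    ← ENNReal.ofReal_mul (by positivity)]
  apply ENNReal.ofReal_le_ofReal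
  push_cast
  have h3 : (N : ℝ) + 1 ≤ 3 * (vmax / (umax * t)) := by
    have : 1 ≤ vmax / (umax * t) := by rw [le_div_iff₀ (by positivity)]; linarith
    linarith
  calc ((N : ℝ) + 1) * ((2 * (umax * t ^ 2)) ^ 2 * π)
      ≤ (3 * (vmax / (umax * t))) * ((2 * (umax * t ^ 2)) ^ 2 * π) := by gcongr
    _ = 12 * π * (umax * vmax * t ^ 3) := by field_simp; ring

/-! The square. -/
lemma square_eq (a b₁ b₂ : ℝ) :
    {q : Plane | q 0 ∈ Set.Icc b₁ (b₁ + a) ∧ q 1 ∈ Set.Icc b₂ (b₂ + a)} =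
      WithLp.ofLp ⁻¹' (Set.Icc ![b₁, b₂] ![b₁ + a, b₂ + a]) := by
  ext q
  simp [Set.mem_Icc, Pi.le_def, Fin.forall_fin_two]
  tauto

lemma square_volume (a b₁ b₂ : ℝ) (ha : 0 < a) :
    volume {q : Plane | q 0 ∈ Set.Icc b₁ (b₁ + a) ∧ q 1 ∈ Set.Icc b₂ (b₂ + a)} =
      ENNReal.ofReal (a ^ 2) := by
  rw [square_eq, (PiLp.volume_preserving_ofLp (Fin 2)).measure_preimage
    measurableSet_Icc.nullMeasurableSet, Real.volume_Icc_pi]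
  simp [Fin.prod_univ_two, sq, ENNReal.ofReal_mul ha.le]

lemma square_compact (a b₁ b₂ : ℝ) :
    IsCompact {q : Plane | q 0 ∈ Set.Icc b₁ (b₁ + a) ∧ q 1 ∈ Set.Icc b₂ (b₂ + a)} := by
  rw [square_eq]
  exact ((EuclideanSpace.equiv (Fin 2) ℝ).toHomeomorph.isCompact_preimage).2 isCompact_Icc

lemma iInf_tau_integrable {vmax umax : ℝ} (hv : 0 < vmax) (hu : 0 < umax) {m : ℕ} (hm : 0 < m)
    (g : Fin m → Plane × Plane) (hg : ∀ i, ‖(g i).2‖ ≤ vmax) {Q : Set Plane} (hQ : IsCompact Q) :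
    IntegrableOn (fun q => ⨅ i, tauDI vmax umax (g i).1 (g i).2 q) Q volume := by
  let i0 : Fin m := ⟨0, hm⟩
  have hbd : IntegrableOn (fun q : Plane => ‖q - (g i0).1‖ / vmax +
      2 * (π / (umax / (2 * vmax)))) Q volume := by
    apply ContinuousOn.integrableOn_compact hQ
    fun_prop
  refine Integrable.mono' hbd ?_ ?_
  · exact (AEMeasurable.iInf fun i => tau_aemeasurable hv hu (hg i)).restrict.aestronglyMeasurable
  · refine Eventually.of_forall fun q => ?_
    rw [Real.norm_eq_abs, abs_of_nonneg (Real.iInf_nonneg fun i => tau_nonneg _ _ _ _ _)]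
    refine (ciInf_le ⟨0, ?_⟩ i0).trans
      (tau_le_of_reach (by positivity) (exists_reach vmax umax hv hu _ _ q (hg i0)))
    rintro _ ⟨i, rfl⟩
    exact tau_nonneg _ _ _ _ _

lemma cost_ge {vmax umax a : ℝ} (hv : 0 < vmax) (hu : 0 < umax) (ha : 0 < a) (b₁ b₂ : ℝ)
    {m : ℕ} (hm : 0 < m) (g : Fin m → Plane × Plane) (hg : ∀ i, ‖(g i).2‖ ≤ vmax)
    {t : ℝ} (ht : 0 < t) (htu : umax * t ≤ vmax)
    (hmt : m * (12 * π * (umax * vmax * t ^ 3)) ≤ a ^ 2 / 2) :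
    t / 2 ≤ (1 / a ^ 2) *
      ∫ q in {q : Plane | q 0 ∈ Set.Icc b₁ (b₁ + a) ∧ q 1 ∈ Set.Icc b₂ (b₂ + a)},
        ⨅ i, tauDI vmax umax (g i).1 (g i).2 q := by
  have hvol := square_volume a b₁ b₂ ha
  have hcomp := square_compact a b₁ b₂
  set Q := {q : Plane | q 0 ∈ Set.Icc b₁ (b₁ + a) ∧ q 1 ∈ Set.Icc b₂ (b₂ + a)} with hQ
  have hint := iInf_tau_integrable hv hu hm g hg hcomp
  have hmark := mul_meas_ge_le_integral_of_nonneg (μ := volume.restrict Q)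
    (Eventually.of_forall fun q => Real.iInf_nonneg fun i => tau_nonneg vmax umax (g i).1 (g i).2 q)
    hint t
  set S := {q : Plane | t ≤ ⨅ i, tauDI vmax umax (g i).1 (g i).2 q} with hS
  have : Nonempty (Fin m) := ⟨⟨0, hm⟩⟩
  have hcov : Q ⊆ (S ∩ Q) ∪ ⋃ i : Fin m, {q | tauDI vmax umax (g i).1 (g i).2 q < t} := by
    intro q hq
    by_cases h : t ≤ ⨅ i, tauDI vmax umax (g i).1 (g i).2 q
    · exact Or.inl ⟨h, hq⟩
    · right
      obtain ⟨i, hi⟩ := exists_lt_of_ciInf_lt (not_le.1 h)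
      exact Set.mem_iUnion.2 ⟨i, hi⟩
  have h1 : volume (⋃ i : Fin m, {q | tauDI vmax umax (g i).1 (g i).2 q < t}) ≤
      ENNReal.ofReal (a ^ 2 / 2) := by
    refine (measure_iUnion_fintype_le _ _).trans ?_
    refine (Finset.sum_le_sum fun i _ => volume_reach_le hv hu (hg i) ht htu).trans ?_
    rw [Finset.sum_const, Finset.card_univ, Fintype.card_fin, nsmul_eq_mul,
      ← ENNReal.ofReal_natCast, ← ENNReal.ofReal_mul (by positivity)]
    exact ENNReal.ofReal_le_ofReal hmt
  have hfin : volume.restrict Q S ≠ ⊤ := by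
    refine ((measure_mono (Set.subset_univ S)).trans_lt ?_).ne
    rw [Measure.restrict_apply_univ, hvol]
    exact ENNReal.ofReal_lt_top
  have h2 : a ^ 2 / 2 ≤ (volume.restrict Q).real S := by
    have h3 : ENNReal.ofReal (a ^ 2) ≤
        ENNReal.ofReal ((volume.restrict Q).real S) + ENNReal.ofReal (a ^ 2 / 2) := by
      rw [← hvol, Measure.real, ENNReal.ofReal_toReal hfin]
      refine (measure_mono hcov).trans ((measure_union_le _ _).trans ?_)
      exact add_le_add (Measure.le_restrict_apply Q S) h1
    rw [← ENNReal.ofReal_add measureReal_nonneg (by positivity),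
      ENNReal.ofReal_le_ofReal_iff (add_nonneg measureReal_nonneg (by positivity))] at h3
    linarith
  rw [one_div, le_inv_mul_iff₀ (by positivity)]
  refine le_trans ?_ hmark
  nlinarith

/-! Upper bound (needed so that the `liminf` is a genuine one). -/
lemma fast_reach {vmax umax : ℝ} (hv : 0 < vmax) (hu : 0 < umax) (p q : Plane) {T : ℝ}
    (hT : 0 < 1 - cos T) (h0 : q 0 = p 0 + T * (vmax / 2))
    (h1 : |q 1 - p 1| ≤ min (vmax / 2) umax * (1 - cos T)) :
    q ∈ exactReach vmax umax p !₂[vmax / 2, 0] T := by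
  have hw : ‖(!₂[0, (q 1 - p 1) / (1 - cos T)] : Plane)‖ ≤ min (vmax / 2) umax := by
    rw [EuclideanSpace.norm_eq]
    simp only [Fin.sum_univ_two]
    simp [Real.sqrt_sq_eq_abs, abs_div, abs_of_pos hT, -le_inf_iff]
    rwa [div_le_iff₀ hT]
  have hv0 : ‖(!₂[vmax / 2, 0] : Plane)‖ = vmax / 2 := by
    rw [EuclideanSpace.norm_eq]
    simp only [Fin.sum_univ_two]
    simp [Real.sqrt_sq_eq_abs, abs_div, abs_of_pos hv]
  have hwv := hw.trans (min_le_left _ _)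
  have hwu := hw.trans (min_le_right _ _)
  have := traj_of vmax umax p !₂[vmax / 2, 0] !₂[0, (q 1 - p 1) / (1 - cos T)]
    (fun t => 1 - cos t) sin cos (contDiff_const.sub Real.contDiff_cos)
    (fun t => by simpa using (Real.hasDerivAt_cos t).const_sub 1)
    (fun t => Real.hasDerivAt_sin t)
    (fun t => by
      refine (norm_add_le _ _).trans ?_
      rw [norm_smul, hv0, Real.norm_eq_abs]
      nlinarith [Real.abs_sin_le_one t, abs_nonneg (sin t),
        norm_nonneg (!₂[0, (q 1 - p 1) / (1 - cos T)] : Plane)])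
    (fun t => by
      rw [norm_smul, Real.norm_eq_abs]
      nlinarith [Real.abs_cos_le_one t, abs_nonneg (cos t),
        norm_nonneg (!₂[0, (q 1 - p 1) / (1 - cos T)] : Plane)])
    (by simp) (by simp) T
  convert this using 1
  ext i
  fin_cases i
  · simp [h0]
  · simp [mul_div_cancel₀ _ hT.ne']

lemma exists_cell {a s : ℝ} (ha : 0 < a) (h0 : 0 ≤ s) (h1 : s ≤ a) {n : ℕ} (hn : 0 < n) :
    ∃ i : Fin n, (i : ℝ) * (a / n) ≤ s ∧ s ≤ (i : ℝ) * (a / n) + a / n := by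
  have hn' : (0 : ℝ) < n := by exact_mod_cast hn
  have han : 0 < a / n := by positivity
  rcases h1.lt_or_eq with h | h
  · have hf : ⌊s / (a / n)⌋₊ < n := by
      rw [Nat.floor_lt (by positivity), div_lt_iff₀ han]
      field_simp
      exact h
    refine ⟨⟨⌊s / (a / n)⌋₊, hf⟩, ?_, ?_⟩
    · have := Nat.floor_le (by positivity : 0 ≤ s / (a / n))
      rwa [le_div_iff₀ han] at this
    · have := (Nat.lt_floor_add_one (s / (a / n))).le
      rw [div_le_iff₀ han] at this
      simp only
      linarith
  · refine ⟨⟨n - 1, by omega⟩, ?_, ?_⟩ <;> simp only [Nat.cast_pred hn, h]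
    · have : ((n : ℝ) - 1) * (a / n) = a - a / n := by field_simp
      linarith
    · have : ((n : ℝ) - 1) * (a / n) = a - a / n := by field_simp
      linarith

lemma upper_config {vmax umax a : ℝ} (hv : 0 < vmax) (hu : 0 < umax) (ha : 0 < a) (b₁ b₂ : ℝ) :
    ∃ K : ℝ, 0 ≤ K ∧ ∀ n : ℕ, 0 < n → K ≤ n → ∃ g : Fin (n ^ 3) → Plane × Plane,
      (∀ i, ‖(g i).2‖ ≤ vmax) ∧
      ∀ q ∈ {q : Plane | q 0 ∈ Set.Icc b₁ (b₁ + a) ∧ q 1 ∈ Set.Icc b₂ (b₂ + a)},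
        (⨅ i, tauDI vmax umax (g i).1 (g i).2 q) ≤ K / n := by
  set c := min (vmax / 2) umax with hc
  have hcpos : 0 < c := lt_min (by positivity) hu
  set y := a * π ^ 2 / (2 * c) with hy
  have hypos : 0 < y := by positivity
  set D := 1 + y with hD
  have hDpos : 0 < D := by positivity
  refine ⟨2 * a / vmax + D, by positivity, ?_⟩
  intro n hn hKn
  have hn' : (0 : ℝ) < n := by exact_mod_cast hn
  let e : Fin (n ^ 3) ≃ Fin n × Fin (n ^ 2) := Fintype.equivOfCardEq (by simp; ring)
  refine ⟨fun k => (!₂[b₁ + ((e k).1 : ℝ) * (a / n) - (vmax / 2) * (D / n),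
    b₂ + ((e k).2 : ℝ) * (a / (n ^ 2 : ℕ))], !₂[vmax / 2, 0]), ?_, ?_⟩
  · intro i
    rw [EuclideanSpace.norm_eq]
    simp only [Fin.sum_univ_two]
    simp [Real.sqrt_sq_eq_abs, abs_div, abs_of_pos hv]
    linarith
  · rintro q ⟨⟨hq1, hq2⟩, ⟨hq3, hq4⟩⟩
    obtain ⟨i, hi1, hi2⟩ := exists_cell ha (sub_nonneg.2 hq1) (by linarith : q 0 - b₁ ≤ a) hn
    obtain ⟨j, hj1, hj2⟩ := exists_cell ha (sub_nonneg.2 hq3) (by linarith : q 1 - b₂ ≤ a)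
      (pow_pos hn 2)
    refine (ciInf_le ⟨0, ?_⟩ (e.symm (i, j))).trans ?_
    · rintro _ ⟨i, rfl⟩
      exact tau_nonneg _ _ _ _ _
    simp only [Equiv.apply_symm_apply]
    set T := (q 0 - b₁ - i * (a / n)) / (vmax / 2) + D / n with hT
    have hT1 : D / n ≤ T := by
      have : 0 ≤ (q 0 - b₁ - i * (a / n)) / (vmax / 2) := div_nonneg (by linarith) (by positivity)
      linarith
    have hT2 : T ≤ (2 * a / vmax + D) / n := by
      have : (q 0 - b₁ - i * (a / n)) / (vmax / 2) ≤ (a / n) / (vmax / 2) := by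
        gcongr
        linarith
      have e2 : (2 * a / vmax + D) / n = (a / n) / (vmax / 2) + D / n := by field_simp
      linarith
    have hDn : 0 < D / n := by positivity
    have hT0 : 0 < T := hDn.trans_le hT1
    have hT3 : T ≤ 1 := hT2.trans ((div_le_one hn').2 hKn)
    refine (tau_le_of_reach hT0.le ?_).trans hT2
    have hcos := Real.cos_le_one_sub_mul_cos_sq (x := T)
      (by rw [abs_of_pos hT0]; linarith [Real.pi_gt_three])
    have hsq : (D / n) ^ 2 ≤ T ^ 2 := by gcongr
    have hlow : a / (n ^ 2 : ℕ) ≤ c * (1 - cos T) := by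
      have h1 : c * (2 / π ^ 2 * (D / n) ^ 2) ≤ c * (1 - cos T) := by
        gcongr
        have : 2 / π ^ 2 * (D / n) ^ 2 ≤ 2 / π ^ 2 * T ^ 2 := by gcongr
        linarith
      refine le_trans ?_ h1
      have h2 : c * (2 / π ^ 2 * (D / n) ^ 2) = (c * (2 / π ^ 2) * D ^ 2) / (n ^ 2 : ℕ) := by
        push_cast
        field_simp
      rw [h2]
      gcongr
      have h3 : a = c * (2 / π ^ 2) * y := by rw [hy]; field_simp
      have h4 : y ≤ D ^ 2 := by rw [hD]; nlinarith
      calc a = c * (2 / π ^ 2) * y := h3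
        _ ≤ _ := by gcongr
    have han : 0 < a / (n ^ 2 : ℕ) := by positivity
    apply fast_reach hv hu
    · by_contra hneg
      nlinarith
    · simp [hT]
      field_simp
      ring
    · refine le_trans ?_ hlow
      rw [abs_le]
      simp only [Matrix.cons_val_one, Matrix.cons_val_fin_one]
      constructor <;> linarith

/-- asymptotic lower bound on the optimal light-load coverage cost of `m`
DI robots in a square `Q` of area `A = a²`:
`liminf_{m→∞} m^{1/3} · T_opt^DI(m) ≥ (1/24) (A/(2 v_max u_max))^{1/3}`. -/
theorem di_coverage_asymptotic_lower_bound
    (vmax umax a : ℝ) (hvmax : 0 < vmax) (humax : 0 < umax) (ha : 0 < a) (b₁ b₂ : ℝ) :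
    let A : ℝ := a ^ 2
    let Q : Set Plane := {q | q 0 ∈ Set.Icc b₁ (b₁ + a) ∧ q 1 ∈ Set.Icc b₂ (b₂ + a)}
    let Topt : ℕ → ℝ := fun m =>
      sInf {c : ℝ | ∃ g : Fin m → Plane × Plane, (∀ i, ‖(g i).2‖ ≤ vmax) ∧
        c = (1 / A) * ∫ q in Q, ⨅ i, tauDI vmax umax (g i).1 (g i).2 q}
    (1 / 24) * (A / (2 * vmax * umax)) ^ ((1 : ℝ) / 3) ≤
      Filter.liminf (fun m : ℕ => (m : ℝ) ^ ((1 : ℝ) / 3) * Topt m) Filter.atTop := by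
  intro A Q Topt
  have hA : 0 < A := by positivity
  set X := (A / (2 * vmax * umax)) ^ ((1 : ℝ) / 3) with hX
  have hXpos : 0 < X := by positivity
  have hX3 : X ^ 3 = A / (2 * vmax * umax) := by
    rw [hX, ← Real.rpow_natCast, ← Real.rpow_mul (by positivity)]
    norm_num
  have hvol : volume Q = ENNReal.ofReal A := square_volume a b₁ b₂ ha
  apply le_liminf_of_le
  · -- coboundedness
    obtain ⟨K, hK0, hK⟩ := upper_config hvmax humax ha b₁ b₂
    have hfreq : ∃ᶠ n : ℕ in atTop, ((n ^ 3 : ℕ) : ℝ) ^ ((1 : ℝ) / 3) * Topt (n ^ 3) ≤ K := by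
      apply Eventually.frequently
      filter_upwards [eventually_gt_atTop 0, eventually_ge_atTop ⌈K⌉₊] with n hn hn2
      have hn' : (0 : ℝ) < n := by exact_mod_cast hn
      obtain ⟨g, hg, hgq⟩ := hK n hn (Nat.ceil_le.1 hn2)
      have h1 : Topt (n ^ 3) ≤ K / n := by
        have hb : BddBelow {c : ℝ | ∃ g : Fin (n ^ 3) → Plane × Plane, (∀ i, ‖(g i).2‖ ≤ vmax) ∧
            c = (1 / A) * ∫ q in Q, ⨅ i, tauDI vmax umax (g i).1 (g i).2 q} := by
          refine ⟨0, ?_⟩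
          rintro _ ⟨g, -, rfl⟩
          refine mul_nonneg (by positivity) (integral_nonneg fun q => ?_)
          exact Real.iInf_nonneg fun i => tau_nonneg _ _ _ _ _
        refine (csInf_le hb ⟨g, hg, rfl⟩).trans ?_
        · have h2 := norm_setIntegral_le_of_norm_le_const (μ := volume) (s := Q) (C := K / n)
            (f := fun q => ⨅ i, tauDI vmax umax (g i).1 (g i).2 q)
            (by rw [hvol]; exact ENNReal.ofReal_lt_top) (fun q hq => by
              rw [Real.norm_eq_abs, abs_of_nonneg (Real.iInf_nonneg fun i => tau_nonneg _ _ _ _ _)]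
              exact hgq q hq)
          have h3 := (le_abs_self _).trans h2
          rw [Measure.real, hvol, ENNReal.toReal_ofReal hA.le] at h3
          rw [one_div, inv_mul_le_iff₀ hA]
          linarith
      have h4 : ((n ^ 3 : ℕ) : ℝ) ^ ((1 : ℝ) / 3) = n := by
        push_cast
        rw [← Real.rpow_natCast, ← Real.rpow_mul hn'.le]
        norm_num
      rw [h4]
      rw [le_div_iff₀ hn'] at h1
      linarith
    have : ∃ᶠ m : ℕ in atTop, (m : ℝ) ^ ((1 : ℝ) / 3) * Topt m ≤ K :=
      (tendsto_pow_atTop (α := ℕ) (n := 3) (by norm_num)).frequently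
        (p := fun m : ℕ => (m : ℝ) ^ ((1 : ℝ) / 3) * Topt m ≤ K) hfreq
    exact IsCoboundedUnder.of_frequently_le this
  · have htend : Tendsto (fun m : ℕ => (m : ℝ) ^ ((1 : ℝ) / 3)) atTop atTop :=
      (tendsto_rpow_atTop (by norm_num)).comp tendsto_natCast_atTop_atTop
    filter_upwards [eventually_gt_atTop 0,
      htend.eventually_ge_atTop (umax * X / (12 * vmax))] with m hm hmlarge
    have hm' : (0 : ℝ) < m := by exact_mod_cast hm
    set s := (m : ℝ) ^ ((1 : ℝ) / 3) with hs
    have hspos : 0 < s := by positivity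
    have hs3 : s ^ 3 = m := by
      rw [hs, ← Real.rpow_natCast, ← Real.rpow_mul (by positivity)]
      norm_num
    have key : X / (12 * s) / 2 ≤ Topt m := by
      apply le_csInf
      · exact ⟨_, fun _ => (0, 0), fun _ => by simpa using hvmax.le, rfl⟩
      · rintro _ ⟨g, hg, rfl⟩
        apply cost_ge hvmax humax ha b₁ b₂ hm g hg (by positivity)
        · rw [div_le_iff₀ (by positivity)] at hmlarge
          rw [← mul_div_assoc, div_le_iff₀ (by positivity)]
          linarith
        · have : (m : ℝ) * (12 * π * (umax * vmax * (X / (12 * s)) ^ 3)) = π / 288 * A := by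
            rw [div_pow, mul_pow, hs3, hX3]
            field_simp
            norm_num
          rw [this]
          change π / 288 * A ≤ A / 2
          nlinarith [Real.pi_le_four]
    have : (1 / 24) * X = s * (X / (12 * s) / 2) := by field_simp; norm_num
    rw [this]
    gcongr
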